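/- Fix q ∈ (0,1). Let A_q be the ℂ-algebra presented by two generators z, w subject to the single relation w·z = q²·z·w + (1 - q²)·1, realized as the quotient (RingQuot) of the free ℂ-algebra on two generators by this relation. Let S be the bounded operator on ℓ²(ℕ, ℂ) with S δ_m = √(1 - q^{2(m+1)}) · δ_{m+1}. Then there exists a ℂ-algebra homomorphism π from A_q to the algebra of bounded operators on ℓ²(ℕ, ℂ) with π(z) = S and π(w) = S*; in particular π(w) is the adjoint of π(z), so π is a *-representation of Pol(ℂ)_q. -/

import Mathlib

/-- `ℓ²(ℕ, ℂ)`. -/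
noncomputable abbrev QDisc.H : Type := lp (fun _ : ℕ => ℂ) 2

/-- The standard orthonormal basis vector `δ_m` of `ℓ²(ℕ, ℂ)`. -/
noncomputable def QDisc.δ (m : ℕ) : QDisc.H := lp.single 2 m (1 : ℂ)

/-- The generator `z` of the free algebra on two generators. -/
noncomputable def QDisc.z : FreeAlgebra ℂ (Fin 2) := FreeAlgebra.ι ℂ (0 : Fin 2)

/-- The generator `w` (playing the role of `z*`) of the free algebra on two generators. -/
noncomputable def QDisc.w : FreeAlgebra ℂ (Fin 2) := FreeAlgebra.ι ℂ (1 : Fin 2)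

/-- The defining relation `w z = q² z w + (1 - q²) 1` of `Pol(ℂ)_q` (relation (1)). -/
def QDisc.relPlane (q : ℝ) : FreeAlgebra ℂ (Fin 2) → FreeAlgebra ℂ (Fin 2) → Prop :=
  fun a b => a = QDisc.w * QDisc.z ∧
    b = ((q ^ 2 : ℝ) : ℂ) • (QDisc.z * QDisc.w) + ((1 - q ^ 2 : ℝ) : ℂ) • 1

/-!
On the basis vectors of a weighted shift `T` with weights `c`, both `T† T` and `T T†` are diagonal:
the former has entries `‖c 0‖ ^ 2, ‖c 1‖ ^ 2, …` and the latter `0, ‖c 0‖ ^ 2, ‖c 1‖ ^ 2, …`. Hence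
`T† T = α T T† + β` says that `t m = ‖c m‖ ^ 2` solves `t 0 = β`, `t (m + 1) = α t m + β`. For
`α = q ^ 2` and `β = 1 - q ^ 2` the solution is `t m = 1 - q ^ (2 * (m + 1))`.
-/

open ContinuousLinearMap
open scoped InnerProductSpace InnerProduct ComplexConjugate

section HilbertBasis

variable {ι 𝕜 E : Type*} [RCLike 𝕜] [NormedAddCommGroup E] [InnerProductSpace 𝕜 E]

theorem eq_of_forall_inner_hilbertBasis_eq (b : HilbertBasis ι 𝕜 E) {x y : E}
    (h : ∀ i, ⟪b i, x⟫_𝕜 = ⟪b i, y⟫_𝕜) : x = y := by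
  refine b.repr.injective (lp.ext (funext fun i => ?_))
  rw [b.repr_apply_apply, b.repr_apply_apply, h i]

theorem continuousLinearMap_ext_hilbertBasis {F : Type*} [TopologicalSpace F] [T2Space F]
    [AddCommMonoid F] [Module 𝕜 F] (b : HilbertBasis ι 𝕜 E) {f g : E →L[𝕜] F}
    (h : ∀ i, f (b i) = g (b i)) : f = g :=
  ext_on (Submodule.dense_iff_topologicalClosure_eq_top.2 b.dense_span) (Set.forall_mem_range.2 h)

end HilbertBasis

/-- `IsWeightedShift b c T` says that `T` is the (unilateral, forward) weighted shift with weights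
`c` along the Hilbert basis `b`. It is a predicate rather than a construction because no bounded `T`
exists when `c` is unbounded. -/
def IsWeightedShift {𝕜 E : Type*} [RCLike 𝕜] [NormedAddCommGroup E] [InnerProductSpace 𝕜 E]
    (b : HilbertBasis ℕ 𝕜 E) (c : ℕ → 𝕜) (T : E →L[𝕜] E) : Prop :=
  ∀ m, T (b m) = c m • b (m + 1)

namespace IsWeightedShift

variable {𝕜 E : Type*} [RCLike 𝕜] [NormedAddCommGroup E] [InnerProductSpace 𝕜 E] [CompleteSpace E]
  {b : HilbertBasis ℕ 𝕜 E} {c : ℕ → 𝕜} {T : E →L[𝕜] E}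

theorem inner_adjoint_apply (hT : IsWeightedShift b c T) (x : E) (k : ℕ) :
    ⟪b k, (T†) x⟫_𝕜 = conj (c k) * ⟪b (k + 1), x⟫_𝕜 := by
  rw [adjoint_inner_right, hT k, inner_smul_left]

theorem adjoint_apply_zero (hT : IsWeightedShift b c T) : (T†) (b 0) = 0 := by
  refine eq_of_forall_inner_hilbertBasis_eq b fun k => ?_
  rw [hT.inner_adjoint_apply, b.orthonormal.inner_eq_zero k.succ_ne_zero, mul_zero,
    inner_zero_right]

theorem adjoint_apply_succ (hT : IsWeightedShift b c T) (m : ℕ) :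
    (T†) (b (m + 1)) = conj (c m) • b m := by
  refine eq_of_forall_inner_hilbertBasis_eq b fun k => ?_
  rw [hT.inner_adjoint_apply, inner_smul_right, orthonormal_iff_ite.1 b.orthonormal,
    orthonormal_iff_ite.1 b.orthonormal]
  obtain rfl | hkm := eq_or_ne k m
  · simp
  · simp [hkm]

theorem adjoint_mul_self_apply (hT : IsWeightedShift b c T) (m : ℕ) :
    (T† * T) (b m) = ((‖c m‖ ^ 2 : ℝ) : 𝕜) • b m := by
  rw [mul_apply_eq_comp, hT m, map_smul, hT.adjoint_apply_succ, smul_smul, RCLike.mul_conj,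
    RCLike.ofReal_pow]

theorem self_mul_adjoint_apply_zero (hT : IsWeightedShift b c T) : (T * T†) (b 0) = 0 := by
  rw [mul_apply_eq_comp, hT.adjoint_apply_zero, map_zero]

theorem self_mul_adjoint_apply_succ (hT : IsWeightedShift b c T) (m : ℕ) :
    (T * T†) (b (m + 1)) = ((‖c m‖ ^ 2 : ℝ) : 𝕜) • b (m + 1) := by
  rw [mul_apply_eq_comp, hT.adjoint_apply_succ, map_smul, hT m, smul_smul, RCLike.conj_mul,
    RCLike.ofReal_pow]

theorem adjoint_mul_self_eq (hT : IsWeightedShift b c T) {α β : ℝ} (h_zero : ‖c 0‖ ^ 2 = β)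
    (h_succ : ∀ m, ‖c (m + 1)‖ ^ 2 = α * ‖c m‖ ^ 2 + β) :
    T† * T = (α : 𝕜) • (T * T†) + (β : 𝕜) • 1 := by
  refine continuousLinearMap_ext_hilbertBasis b fun m => ?_
  rw [hT.adjoint_mul_self_apply, add_apply, smul_apply, smul_apply, one_apply_eq_self]
  cases m with
  | zero => rw [hT.self_mul_adjoint_apply_zero, h_zero, smul_zero, zero_add]
  | succ m =>
    rw [hT.self_mul_adjoint_apply_succ, h_succ, smul_smul, ← add_smul, RCLike.ofReal_add,
      RCLike.ofReal_mul]

end IsWeightedShift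

theorem norm_sqrt_one_sub_pow_sq {q : ℝ} (hq : |q| ≤ 1) (m : ℕ) :
    ‖(√(1 - q ^ (2 * m)) : ℂ)‖ ^ 2 = 1 - q ^ (2 * m) := by
  have hpow : q ^ (2 * m) ≤ 1 := by
    rw [pow_mul]
    exact pow_le_one₀ (sq_nonneg q) ((sq_le_one_iff_abs_le_one q).2 hq)
  rw [Complex.norm_real, Real.norm_eq_abs, sq_abs, Real.sq_sqrt (sub_nonneg.2 hpow)]

namespace QDisc

section UniversalProperty

variable {A : Type*} [Semiring A] [Algebra ℂ A] {q : ℝ} {a b : A}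

/-- The universal property of `Pol(ℂ)_q` as an algebra without involution: elements `a`, `b`
satisfying the defining relation determine a homomorphism with `z ↦ a` and `w ↦ b`. -/
noncomputable def lift
    (h : b * a = ((q ^ 2 : ℝ) : ℂ) • (a * b) + ((1 - q ^ 2 : ℝ) : ℂ) • 1) :
    RingQuot (relPlane q) →ₐ[ℂ] A :=
  RingQuot.liftAlgHom ℂ ⟨FreeAlgebra.lift ℂ ![a, b], by
    rintro _ _ ⟨rfl, rfl⟩
    simpa [z, w] using h⟩

theorem lift_z (h : b * a = ((q ^ 2 : ℝ) : ℂ) • (a * b) + ((1 - q ^ 2 : ℝ) : ℂ) • 1) :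
    lift h (RingQuot.mkAlgHom ℂ (relPlane q) z) = a := by
  simp [lift, z]

theorem lift_w (h : b * a = ((q ^ 2 : ℝ) : ℂ) • (a * b) + ((1 - q ^ 2 : ℝ) : ℂ) • 1) :
    lift h (RingQuot.mkAlgHom ℂ (relPlane q) w) = b := by
  simp [lift, w]

end UniversalProperty

/-- The standard orthonormal basis `δ` of `ℓ²(ℕ, ℂ)` as a Hilbert basis. -/
noncomputable def standardBasis : HilbertBasis ℕ ℂ H :=
  HilbertBasis.ofRepr (LinearIsometryEquiv.refl ℂ H)

theorem standardBasis_apply (m : ℕ) : standardBasis m = δ m :=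
  (standardBasis.repr_symm_single m).symm

end QDisc

open QDisc in
theorem quantum_plane_algebra_representation_general {E : Type*} [NormedAddCommGroup E]
    [InnerProductSpace ℂ E] [CompleteSpace E] (b : HilbertBasis ℕ ℂ E) {q : ℝ} (hq : |q| ≤ 1)
    {T : E →L[ℂ] E} (hT : IsWeightedShift b (fun m => (√(1 - q ^ (2 * (m + 1))) : ℂ)) T) :
    ∃ φ : RingQuot (relPlane q) →ₐ[ℂ] (E →L[ℂ] E),
      φ (RingQuot.mkAlgHom ℂ (relPlane q) z) = T ∧
      φ (RingQuot.mkAlgHom ℂ (relPlane q) w) = T† := by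
  have hrel : T† * T = ((q ^ 2 : ℝ) : ℂ) • (T * T†) + ((1 - q ^ 2 : ℝ) : ℂ) • 1 := by
    refine hT.adjoint_mul_self_eq (α := q ^ 2) (β := 1 - q ^ 2) ?_ fun m => ?_
    · rw [norm_sqrt_one_sub_pow_sq hq, zero_add, mul_one]
    · rw [norm_sqrt_one_sub_pow_sq hq, norm_sqrt_one_sub_pow_sq hq]
      ring
  exact ⟨lift hrel, lift_z hrel, lift_w hrel⟩

open QDisc in
/-- The weighted shift `S δ_m = √(1 - q^{2(m+1)}) δ_{m+1}` and its adjoint define a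
`*`-representation of `Pol(ℂ)_q = ℂ⟨z, w⟩ / (wz = q² zw + (1-q²))` on `ℓ²(ℕ, ℂ)`. -/
theorem quantum_plane_algebra_representation
    (q : ℝ) (hq0 : 0 < q) (hq1 : q < 1)
    (S : H →L[ℂ] H)
    (hS : ∀ m : ℕ, S (δ m) = (Real.sqrt (1 - q ^ (2 * (m + 1))) : ℂ) • δ (m + 1)) :
    ∃ φ : RingQuot (relPlane q) →ₐ[ℂ] (H →L[ℂ] H),
      φ (RingQuot.mkAlgHom ℂ (relPlane q) z) = S ∧
      φ (RingQuot.mkAlgHom ℂ (relPlane q) w) = ContinuousLinearMap.adjoint S := by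
  exact quantum_plane_algebra_representation_general standardBasis
    ((abs_of_pos hq0).trans_le hq1.le) fun m => by simpa only [standardBasis_apply] using hS m
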